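/- Let q ≡ 1 (mod 4) be a prime power and let a ∈ F_q be such that a ≠ −1, 0, 1, the elements a, a+1, a³−a−1 are squares in F_q, and the elements a−1, a²+1, a²−a−1, a²+a+1, a²+a−1 are non-squares in F_q. Write L := L_{a,a²}. Then no triple of the form (0, 1, z) is associative: for every z ∈ F_q, L(L(0,1), z) ≠ L(0, L(1,z)). -/

import Mathlib

open scoped Classical

/-- Case `q ≡ 1 (mod 4)`: no triple `(0, 1, z)` is associative for `L_{a,a²}`. -/
theorem Laa2_no_assoc_01z_q1mod4 (F : Type*) [Field F] [Fintype F]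
    (q : ℕ) (hq : Fintype.card F = q) (h4 : q % 4 = 1)
    (a : F) (ha1 : a ≠ -1) (ha2 : a ≠ 0) (ha3 : a ≠ 1)
    (hs1 : IsSquare a) (hs2 : IsSquare (a + 1)) (hs3 : IsSquare (a ^ 3 - a - 1))
    (hn1 : ¬ IsSquare (a - 1)) (hn2 : ¬ IsSquare (a ^ 2 + 1))
    (hn3 : ¬ IsSquare (a ^ 2 - a - 1)) (hn4 : ¬ IsSquare (a ^ 2 + a + 1))
    (hn5 : ¬ IsSquare (a ^ 2 + a - 1))
    (L : F → F → F)
    (hL : ∀ x y : F,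
      L x y = if IsSquare (y - x) then x + a * (y - x) else x + a ^ 2 * (y - x)) :
    ∀ z : F, L (L 0 1) z ≠ L 0 (L 1 z) := by
  intro z h
  have hm : IsSquare (-1 : F) := by
    rw [FiniteField.isSquare_neg_one_iff]; omega
  have hmul : ∀ x y : F, IsSquare x → IsSquare y → IsSquare (x * y) := fun _ _ hx hy => hx.mul hy
  have hp : a + 1 ≠ 0 := fun h => ha1 (by linear_combination h)
  have hd : a ^ 2 + a + 1 ≠ 0 := fun h => hn4 (by rw [h]; exact IsSquare.zero)
  have hc : a - 1 ≠ 0 := sub_ne_zero.2 ha3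
  -- product of two non-squares is a square
  have hnn : ∀ x y : F, ¬ IsSquare x → ¬ IsSquare y → IsSquare (x * y) := by
    intro x y hx hy
    have hx0 : x ≠ 0 := fun h => hx (by rw [h]; exact IsSquare.zero)
    have hy0 : y ≠ 0 := fun h => hy (by rw [h]; exact IsSquare.zero)
    have h1 := (quadraticChar_neg_one_iff_not_isSquare (F := F) (a := x)).2 hx
    have h2 := (quadraticChar_neg_one_iff_not_isSquare (F := F) (a := y)).2 hy
    rw [← quadraticChar_one_iff_isSquare (mul_ne_zero hx0 hy0), map_mul, h1, h2]
    norm_num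
  -- cancel a nonzero square factor
  have hcan : ∀ x s : F, s ≠ 0 → IsSquare s → IsSquare (x * s) → IsSquare x := by
    intro x s hs0 hs hx
    have := hx.div hs
    rwa [mul_div_cancel_right₀ _ hs0] at this
  have h01 : L 0 1 = a := by rw [hL]; simp
  rw [h01, hL a z, hL 1 z] at h
  by_cases hr : IsSquare (z - a) <;> by_cases hs : IsSquare (z - 1) <;>
    simp only [hr, hs, if_true, if_false] at h <;> rw [hL] at h <;> split_ifs at h with ht <;>
    simp only [sub_zero, zero_add] at h ht
  · have hz : z = 0 := by
      apply mul_left_cancel₀ (mul_ne_zero ha2 hc)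
      linear_combination -h
    apply hn1
    rw [hz] at ht
    have := hmul _ _ hm ht
    convert this using 1
    ring
  · have hz : z * (a + 1) = a - 1 := by
      apply mul_left_cancel₀ (mul_ne_zero ha2 hc)
      linear_combination -h
    apply hn2
    have := hmul _ _ (hmul _ _ hm hr) hs2
    convert this using 1
    linear_combination hz
  · have hz : z * (a + 1) = a := by
      apply mul_left_cancel₀ (mul_ne_zero ha2 hc)
      linear_combination -h
    apply hs
    apply hcan _ _ hp hs2
    convert hm using 1
    linear_combination hz
  · have hz : z * (a ^ 2 + a + 1) = a ^ 2 + a - 1 := by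
      apply mul_left_cancel₀ (mul_ne_zero ha2 hc)
      linear_combination -h
    apply ht
    apply hcan _ ((a ^ 2 + a + 1) * (a ^ 2 + a + 1)) (mul_ne_zero hd hd) ⟨_, rfl⟩
    have := hmul _ _ hm (hnn _ _ hn3 hn4)
    convert this using 1
    linear_combination a ^ 2 * (a ^ 2 + a + 1) * hz
  · apply mul_ne_zero (mul_ne_zero ha2 ha2) hc
    linear_combination -h
  · have hz : z * a = -1 := by
      apply mul_left_cancel₀ (mul_ne_zero ha2 hc)
      linear_combination -h
    apply ht
    have := hmul _ _ hm hs1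
    convert this using 1
    linear_combination hz
  · have hz : z = 0 := by
      apply mul_left_cancel₀ (mul_ne_zero (mul_ne_zero ha2 ha2) hc)
      linear_combination -h
    apply hs
    rw [hz, zero_sub]; exact hm
  · have hz : z * a = a - 1 := by
      apply mul_left_cancel₀ (mul_ne_zero (mul_ne_zero ha2 hp) hc)
      linear_combination -h
    apply hs
    apply hcan _ _ ha2 hs1
    convert hm using 1
    linear_combination hz
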